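/- arXiv:0705.3424 — 3 statements merged into one kernel-verified Lean document; each statement's English description precedes it below -/
import Mathlib

section
/- Let 𝑨 = (A_1,…,A_k) be a tuple of subsets of X which has positive upper μ-independence density, and suppose A_1 = A_{1,1} ∪ A_{1,2}. Then at least one of the tuples 𝑨_1 = (A_{1,1}, A_2,…,A_k) and 𝑨_2 = (A_{1,2}, A_2,…,A_k) has positive upper μ-independence density. -/
open MeasureTheory Set
open scoped Classical ENNReal

/-- `F` is a nonempty `(K,δ)`-invariant finite subset of the group `G`. -/
def FolnerInv {G : Type*} [Group G] (K : Finset G) (δ : ℝ) (F : Finset G) : Prop :=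
  F.Nonempty ∧
    (1 - δ) * (F.card : ℝ) ≤ (((F : Set G)) ∩ {s : G | ∀ g ∈ K, g * s ∈ F}).ncard

/-- The Følner characterisation of amenability for a discrete group `G`. -/
def FolnerAmenable (G : Type*) [Group G] : Prop :=
  ∀ (K : Finset G) (δ : ℝ), 0 < δ → ∃ F : Finset G, FolnerInv K δ F

/-- The limit supremum of `ψ F / |F|` as `F` becomes more and more invariant. -/
noncomputable def invLimsup {G : Type*} [Group G] (ψ : Finset G → ℝ) : ℝ :=
  ⨅ (K : Finset G) (δ : {d : ℝ // 0 < d}),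
    sSup ((fun F : Finset G => ψ F / (F.card : ℝ)) '' {F : Finset G | FolnerInv K δ.1 F})

/-- The limit infimum of `ψ F / |F|` as `F` becomes more and more invariant. -/
noncomputable def invLiminf {G : Type*} [Group G] (ψ : Finset G → ℝ) : ℝ :=
  ⨆ (K : Finset G) (δ : {d : ℝ // 0 < d}),
    sInf ((fun F : Finset G => ψ F / (F.card : ℝ)) '' {F : Finset G | FolnerInv K δ.1 F})

/-- `J ⊆ G` is an independence set for the tuple `A` of subsets of `X` relative to the
map `D : G → Set X`. -/
def IndepRel {G X : Type*} [Group G] [MulAction G X] {k : ℕ} (A : Fin k → Set X)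
    (D : G → Set X) (J : Set G) : Prop :=
  ∀ F : Finset G, (F : Set G) ⊆ J → F.Nonempty → ∀ σ : G → Fin k,
    (⋂ s ∈ F, (D s ∩ (fun x => s • x) ⁻¹' A (σ s))).Nonempty

/-- `J ⊆ G` is an independence set for the tuple `A` relative to the subset `D ⊆ X`. -/
def IndepSet {G X : Type*} [Group G] [MulAction G X] {k : ℕ} (A : Fin k → Set X)
    (D : Set X) (J : Set G) : Prop :=
  IndepRel A (fun _ => D) J

/-- The maximum of `|F ∩ J|` over independence sets `J` for `A` relative to `D`. -/
noncomputable def maxIndep {G X : Type*} [Group G] [MulAction G X] {k : ℕ}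
    (A : Fin k → Set X) (D : G → Set X) (F : Finset G) : ℕ :=
  sSup {m : ℕ | ∃ J : Set G, IndepRel A D J ∧ m = (((F : Set G)) ∩ J).ncard}

/-- `φ_{A,δ}(F)`: the minimum over Borel sets `D` with `μ(D) ≥ 1 - δ` of the maximum
of `|F ∩ J|` over independence sets `J` for `A` relative to `D`. -/
noncomputable def phiConst {G X : Type*} [Group G] [MulAction G X] [MeasurableSpace X]
    (μ : Measure X) {k : ℕ} (A : Fin k → Set X) (δ : ℝ) (F : Finset G) : ℕ :=
  sInf {m : ℕ | ∃ D : Set X, MeasurableSet D ∧ 1 - δ ≤ (μ D).toReal ∧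
    m = maxIndep A (fun _ : G => D) F}

/-- `φ'_{A,δ}(F)`: as `phiConst` but with maps `D : G → Set X` with `μ(D s) ≥ 1 - δ`
for all `s`. -/
noncomputable def phiMap {G X : Type*} [Group G] [MulAction G X] [MeasurableSpace X]
    (μ : Measure X) {k : ℕ} (A : Fin k → Set X) (δ : ℝ) (F : Finset G) : ℕ :=
  sInf {m : ℕ | ∃ D : G → Set X, (∀ s, MeasurableSet (D s)) ∧
    (∀ s, 1 - δ ≤ (μ (D s)).toReal) ∧ m = maxIndep A D F}

/-- The upper `μ`-independence density `Ī_μ(A)` of the tuple `A`. -/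
noncomputable def upperIndepDens (G : Type*) {X : Type*} [Group G] [MulAction G X]
    [MeasurableSpace X] (μ : Measure X) {k : ℕ} (A : Fin k → Set X) : ℝ :=
  ⨆ δ : {d : ℝ // 0 < d}, invLimsup (fun F : Finset G => (phiConst μ A δ.1 F : ℝ))

/-- The lower `μ`-independence density `I̲_μ(A)` of the tuple `A`. -/
noncomputable def lowerIndepDens (G : Type*) {X : Type*} [Group G] [MulAction G X]
    [MeasurableSpace X] (μ : Measure X) {k : ℕ} (A : Fin k → Set X) : ℝ :=
  ⨆ δ : {d : ℝ // 0 < d}, invLiminf (fun F : Finset G => (phiConst μ A δ.1 F : ℝ))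

/-- The measure `μ` is invariant under the action of `G`. -/
def InvariantMeasure (G : Type*) {X : Type*} [Group G] [MulAction G X] [MeasurableSpace X]
    (μ : Measure X) : Prop :=
  ∀ (s : G) (B : Set X), MeasurableSet B → μ ((fun x => s • x) ⁻¹' B) = μ B

/-- The entropy `H_μ(𝒫^F)` of the join `⋁_{s ∈ F} s⁻¹𝒫` of the finite partition `P`. -/
noncomputable def HJoin {G X : Type*} [Group G] [MulAction G X] [MeasurableSpace X]
    (μ : Measure X) {k : ℕ} (P : Fin k → Set X) (F : Finset G) : ℝ :=
  ∑ f : ↥F → Fin k,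
    Real.negMulLog (μ (⋂ s : ↥F, (fun x => (s : G) • x) ⁻¹' P (f s))).toReal

/-- `P` is a finite measurable partition of `X` (members may be empty). -/
def IsMeasPartition {X : Type*} [MeasurableSpace X] {k : ℕ} (P : Fin k → Set X) : Prop :=
  (∀ i, MeasurableSet (P i)) ∧ (Pairwise fun i j => Disjoint (P i) (P j)) ∧
    (⋃ i, P i) = Set.univ

/-- `x` is a (topological) IE-tuple for the action of `G` on `X`. -/
def IsIETuple (G : Type*) {X : Type*} [Group G] [TopologicalSpace X] [MulAction G X]
    {k : ℕ} (x : Fin k → X) : Prop :=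
  ∀ U : Fin k → Set X, (∀ i, U i ∈ nhds (x i)) →
    ∃ d : ℝ, 0 < d ∧ ∀ (K : Finset G) (δ : ℝ), 0 < δ →
      ∃ (F : Finset G) (J : Set G), FolnerInv K δ F ∧ IndepSet U (Set.univ : Set X) J ∧
        d * (F.card : ℝ) ≤ (((F : Set G)) ∩ J).ncard

/-- `x` is a `μ`-IE-tuple. -/
def IsMuIETuple (G : Type*) {X : Type*} [Group G] [TopologicalSpace X] [MulAction G X]
    [MeasurableSpace X] (μ : Measure X) {k : ℕ} (x : Fin k → X) : Prop :=
  ∀ U : Fin k → Set X, (∀ i, U i ∈ nhds (x i)) → 0 < upperIndepDens G μ U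

/-- A Sauer–Shelah type bound: a family of words over an alphabet of `k + 1` letters that only
shatters sets of at most `m` coordinates has at most `4 ^ m * (k + 1 / 4) ^ n` members. -/
lemma card_le_of_shattered_card_le (k : ℕ) : ∀ (n m : ℕ) (S : Finset (Fin n → Fin (k + 1))),
    (∀ I : Finset (Fin n), (∀ f : Fin n → Fin (k + 1), ∃ s ∈ S, ∀ i ∈ I, s i = f i) →
      I.card ≤ m) → (S.card : ℝ) ≤ 4 ^ m * ((k : ℝ) + 1 / 4) ^ n := by
  intro n
  induction n with
  | zero =>
    intro m S _
    have h1 : S.card ≤ 1 := Finset.card_le_one_of_subsingleton S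
    have h2 : (1 : ℝ) ≤ 4 ^ m := one_le_pow₀ (by norm_num)
    have h3 : (S.card : ℝ) ≤ 1 := by exact_mod_cast h1
    simpa using h3.trans h2
  | succ n ih =>
    intro m S hS
    let U : Finset (Fin n → Fin (k + 1)) := S.image Fin.tail
    let T : Finset (Fin n → Fin (k + 1)) :=
      Finset.univ.filter fun t => ∀ l, (Fin.cons l t : Fin (n + 1) → Fin (k + 1)) ∈ S
    have hfiber : ∀ t ∈ U, (S.filter fun s => Fin.tail s = t).card ≤
        k + if t ∈ T then 1 else 0 := by
      intro t _
      have hinj : Set.InjOn (fun s : Fin (n + 1) → Fin (k + 1) => s 0)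
          (S.filter fun s => Fin.tail s = t) := by
        intro a ha b hb hab
        simp only [Finset.coe_filter, Set.mem_ofPred_eq] at ha hb hab
        rw [← Fin.cons_self_tail a, ← Fin.cons_self_tail b, ha.2, hb.2, hab]
      rw [← Finset.card_image_of_injOn hinj]
      split_ifs with ht
      · exact (Finset.card_le_univ _).trans (by simp)
      · simp only [T, Finset.mem_filter, Finset.mem_univ, true_and, not_forall] at ht
        obtain ⟨l, hl⟩ := ht
        have hsub : ((S.filter fun s => Fin.tail s = t).image fun s => s 0) ⊆
            Finset.univ.erase l := by
          intro a ha
          simp only [Finset.mem_image, Finset.mem_filter] at ha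
          obtain ⟨s, ⟨hs, rfl⟩, rfl⟩ := ha
          refine Finset.mem_erase.2 ⟨?_, Finset.mem_univ _⟩
          rintro rfl
          exact hl (by rwa [Fin.cons_self_tail])
        simpa using Finset.card_le_card hsub
    have hcard : S.card ≤ k * U.card + T.card := by
      rw [Finset.card_eq_sum_card_image Fin.tail S]
      refine (Finset.sum_le_sum hfiber).trans ?_
      rw [Finset.sum_add_distrib, Finset.sum_const, smul_eq_mul, mul_comm,
        Finset.sum_boole]
      refine Nat.add_le_add_left (Finset.card_le_card fun t ht => ?_) _
      exact (Finset.mem_filter.1 ht).2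
    have hU : (U.card : ℝ) ≤ 4 ^ m * ((k : ℝ) + 1 / 4) ^ n := by
      refine ih m U fun I hI => ?_
      rw [← Finset.card_map (Fin.succEmb n)]
      refine hS _ fun f => ?_
      obtain ⟨u, hu, huf⟩ := hI (Fin.tail f)
      obtain ⟨s, hs, rfl⟩ := Finset.mem_image.1 hu
      refine ⟨s, hs, fun i hi => ?_⟩
      obtain ⟨j, hj, rfl⟩ := Finset.mem_map.1 hi
      exact huf j hj
    have hTI : ∀ I : Finset (Fin n),
        (∀ f : Fin n → Fin (k + 1), ∃ s ∈ T, ∀ i ∈ I, s i = f i) → I.card + 1 ≤ m := by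
      intro I hI
      have h0 : (0 : Fin (n + 1)) ∉ I.map (Fin.succEmb n) := by
        simp
      rw [← Finset.card_map (Fin.succEmb n), ← Finset.card_insert_of_notMem h0]
      refine hS _ fun f => ?_
      obtain ⟨t, ht, htf⟩ := hI (Fin.tail f)
      refine ⟨Fin.cons (f 0) t, (Finset.mem_filter.1 ht).2 _, fun i hi => ?_⟩
      rcases Finset.mem_insert.1 hi with rfl | hi
      · rfl
      · obtain ⟨j, hj, rfl⟩ := Finset.mem_map.1 hi
        exact htf j hj
    have hT : (T.card : ℝ) ≤ 4 ^ m / 4 * ((k : ℝ) + 1 / 4) ^ n := by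
      rcases T.eq_empty_or_nonempty with hT | ⟨t, ht⟩
      · rw [hT, Finset.card_empty]
        simp only [Nat.cast_zero]
        positivity
      · have hm : 1 ≤ m := by
          simpa using hTI ∅ fun f => ⟨t, ht, by simp⟩
        obtain ⟨m, rfl⟩ := Nat.exists_eq_add_of_le' hm
        have := ih m T fun I hI => Nat.le_of_succ_le_succ (hTI I hI)
        rwa [pow_succ, mul_div_cancel_right₀ _ (by norm_num)]
    have hcard' : (S.card : ℝ) ≤ k * U.card + T.card := by exact_mod_cast hcard
    calc (S.card : ℝ) ≤ k * U.card + T.card := hcard'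
      _ ≤ k * (4 ^ m * ((k : ℝ) + 1 / 4) ^ n) + 4 ^ m / 4 * ((k : ℝ) + 1 / 4) ^ n := by gcongr
      _ = 4 ^ m * ((k : ℝ) + 1 / 4) ^ (n + 1) := by ring

/-- If every word `σ` comes with a two-colouring `c σ` of the coordinates, then for some fixed
colouring `ε` the words whose zeros are coloured according to `ε` are numerous. -/
lemma exists_coloring_card_le {k n : ℕ} (c : (Fin n → Fin (k + 1)) → Fin n → Bool) :
    ∃ ε : Fin n → Bool, ((k : ℝ) + 1 / 2) ^ n ≤
      ((Finset.univ.filter fun σ : Fin n → Fin (k + 1) => ∀ i, σ i = 0 → c σ i = ε i).card : ℝ) := by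
  have hσ : ∀ σ : Fin n → Fin (k + 1),
      (Finset.univ.filter fun ε : Fin n → Bool => ∀ i, σ i = 0 → c σ i = ε i).card =
        ∏ i, if σ i = 0 then 1 else 2 := by
    intro σ
    have : (Finset.univ.filter fun ε : Fin n → Bool => ∀ i, σ i = 0 → c σ i = ε i) =
        Fintype.piFinset fun i => if σ i = 0 then {c σ i} else Finset.univ := by
      ext ε
      simp only [Finset.mem_filter, Finset.mem_univ, true_and, Fintype.mem_piFinset]
      refine forall_congr' fun i => ?_
      split_ifs with h
      · simpa [h] using eq_comm
      · simp [h]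
    rw [this, Fintype.card_piFinset]
    refine Finset.prod_congr rfl fun i _ => ?_
    split_ifs <;> simp
  have hsum : ∑ ε : Fin n → Bool,
      (Finset.univ.filter fun σ : Fin n → Fin (k + 1) => ∀ i, σ i = 0 → c σ i = ε i).card =
        (2 * k + 1) ^ n := by
    have hswap := Finset.sum_card_bipartiteAbove_eq_sum_card_bipartiteBelow
      (s := (Finset.univ : Finset (Fin n → Bool)))
      (t := (Finset.univ : Finset (Fin n → Fin (k + 1))))
      (fun ε σ => ∀ i, σ i = 0 → c σ i = ε i)
    simp only [Finset.bipartiteAbove, Finset.bipartiteBelow] at hswap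
    rw [hswap, Finset.sum_congr rfl fun σ _ => hσ σ,
      ← Fintype.piFinset_univ,
      Finset.sum_prod_piFinset Finset.univ fun (_ : Fin n) (l : Fin (k + 1)) => if l = 0 then 1 else 2]
    simp [Fin.sum_univ_succ]
    ring
  by_contra! h
  have hlt := Finset.sum_lt_sum_of_nonempty (s := (Finset.univ : Finset (Fin n → Bool)))
    Finset.univ_nonempty fun ε _ => h ε
  rw [← Nat.cast_sum, hsum] at hlt
  simp only [Finset.sum_const, Finset.card_univ, Fintype.card_pi, Fintype.card_bool,
    Finset.prod_const, Fintype.card_fin, nsmul_eq_mul] at hlt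
  push_cast at hlt
  rw [← mul_pow] at hlt
  ring_nf at hlt
  exact lt_irrefl _ hlt

/-- The proportion of an independence set that survives splitting one set of the tuple. -/
noncomputable def splitConst (k : ℕ) : ℝ :=
  Real.log (((k : ℝ) + 1 / 2) / (k + 1 / 4)) / (2 * Real.log 4)

lemma splitConst_pos (k : ℕ) : 0 < splitConst k := by
  have h : 1 < ((k : ℝ) + 1 / 2) / (k + 1 / 4) := by
    rw [one_lt_div (by positivity)]
    linarith
  have h4 : 0 < Real.log 4 := Real.log_pos (by norm_num)
  exact div_pos (Real.log_pos h) (by positivity)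

/-- If every word comes with a two-colouring of the coordinates, there are a set of coordinates of
proportion at least `splitConst k` and a colour `b` such that every pattern on this set extends to
a word whose zeros in the set all have colour `b`. -/
lemma exists_monochromatic_shattered {k n : ℕ} (c : (Fin n → Fin (k + 1)) → Fin n → Bool) :
    ∃ (b : Bool) (I : Finset (Fin n)), splitConst k * n ≤ I.card ∧
      ∀ f : Fin n → Fin (k + 1), ∃ σ, ∀ i ∈ I, σ i = f i ∧ (σ i = 0 → c σ i = b) := by
  obtain ⟨ε, hε⟩ := exists_coloring_card_le c
  set S := Finset.univ.filter fun σ : Fin n → Fin (k + 1) => ∀ i, σ i = 0 → c σ i = ε i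
  have hI : ∃ I : Finset (Fin n), 2 * splitConst k * n ≤ I.card ∧
      ∀ f : Fin n → Fin (k + 1), ∃ s ∈ S, ∀ i ∈ I, s i = f i := by
    obtain ⟨I, hI, hmax⟩ : ∃ I ∈ (Finset.univ.filter fun I : Finset (Fin n) =>
        ∀ f : Fin n → Fin (k + 1), ∃ s ∈ S, ∀ i ∈ I, s i = f i),
        ∀ I' ∈ (Finset.univ.filter fun I : Finset (Fin n) =>
          ∀ f : Fin n → Fin (k + 1), ∃ s ∈ S, ∀ i ∈ I, s i = f i), I'.card ≤ I.card := by
      refine Finset.exists_max_image _ _ ⟨∅, ?_⟩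
      have hpos : (0 : ℝ) < S.card := lt_of_lt_of_le (by positivity) hε
      obtain ⟨s, hs⟩ := Finset.card_pos.1 (by exact_mod_cast hpos : 0 < S.card)
      simpa using ⟨s, hs⟩
    refine ⟨I, ?_, (Finset.mem_filter.1 hI).2⟩
    have hle := hε.trans (card_le_of_shattered_card_le k n I.card S fun I' hI' =>
      hmax I' (Finset.mem_filter.2 ⟨Finset.mem_univ _, hI'⟩))
    have hq : (((k : ℝ) + 1 / 2) / (k + 1 / 4)) ^ n ≤ 4 ^ I.card := by
      rw [div_pow, div_le_iff₀ (by positivity)]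
      exact hle
    have hlog := Real.log_le_log (by positivity) hq
    rw [Real.log_pow, Real.log_pow] at hlog
    have h4 : 0 < Real.log 4 := Real.log_pos (by norm_num)
    have heq : 2 * splitConst k * n =
        (n * Real.log (((k : ℝ) + 1 / 2) / (k + 1 / 4))) / Real.log 4 := by
      unfold splitConst
      field_simp
    rw [heq, div_le_iff₀ h4]
    exact hlog
  obtain ⟨I, hcard, hsh⟩ := hI
  have hb : ∃ b : Bool, splitConst k * n ≤ (I.filter fun i => ε i = b).card := by
    by_contra! h
    have hsplit := Finset.card_filter_add_card_filter_not (s := I) (fun i => ε i = true)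
    simp only [Bool.not_eq_true] at hsplit
    have hsplit' : ((I.filter fun i => ε i = true).card : ℝ) +
        (I.filter fun i => ε i = false).card = I.card := by exact_mod_cast hsplit
    linarith [h true, h false]
  obtain ⟨b, hb⟩ := hb
  refine ⟨b, _, hb, fun f => ?_⟩
  obtain ⟨σ, hσ, hσf⟩ := hsh f
  refine ⟨σ, fun i hi => ?_⟩
  obtain ⟨hiI, rfl⟩ := Finset.mem_filter.1 hi
  exact ⟨hσf i hiI, (Finset.mem_filter.1 hσ).2 i⟩

lemma ncard_coe_inter_le {α : Type*} (F : Finset α) (J : Set α) : ((F : Set α) ∩ J).ncard ≤ F.card := by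
  rw [← Set.ncard_coe_finset F]
  exact Set.ncard_le_ncard Set.inter_subset_left F.finite_toSet

section Independence

variable {G X : Type*} [Group G] [MulAction G X] {k : ℕ}

lemma IndepRel.mono {A : Fin k → Set X} {D D' : G → Set X} {J J' : Set G}
    (h : IndepRel A D J) (hD : ∀ s, D s ⊆ D' s) (hJ : J' ⊆ J) : IndepRel A D' J' := by
  intro F hF hne σ
  refine (h F (hF.trans hJ) hne σ).mono ?_
  exact Set.iInter₂_mono fun s _ => Set.inter_subset_inter_left _ (hD s)

lemma indepRel_empty (A : Fin k → Set X) (D : G → Set X) : IndepRel A D ∅ := by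
  intro F hF hne
  obtain ⟨s, hs⟩ := hne
  exact absurd (hF hs) (Set.notMem_empty s)

/-- A finite independence set for a tuple whose first set is `B ∪ C` contains a proportionally
large independence set for one of the two tuples obtained by splitting the first set. -/
lemma exists_indepRel_update {A : Fin (k + 1) → Set X} {B C : Set X} (hA : A 0 = B ∪ C)
    {D : G → Set X} {J : Finset G} (hJ : IndepRel A D J) :
    ∃ J' ⊆ J, splitConst k * J.card ≤ J'.card ∧
      (IndepRel (Function.update A 0 B) D J' ∨ IndepRel (Function.update A 0 C) D J') := by
  rcases J.eq_empty_or_nonempty with rfl | hne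
  · exact ⟨∅, subset_rfl, by simp, Or.inl (by simpa using indepRel_empty _ D)⟩
  let e := J.equivFin
  let w : G → Fin J.card := fun s => if h : s ∈ J then e ⟨s, h⟩ else e ⟨_, hne.choose_spec⟩
  have hw : ∀ i, w (e.symm i) = i := fun i => by simp [w]
  have hpt : ∀ σ : Fin J.card → Fin (k + 1),
      ∃ x : X, ∀ s ∈ J, x ∈ D s ∧ s • x ∈ A (σ (w s)) := by
    intro σ
    obtain ⟨x, hx⟩ := hJ J subset_rfl hne fun s => σ (w s)
    exact ⟨x, fun s hs => Set.mem_iInter₂.1 hx s hs⟩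
  choose x hx using hpt
  obtain ⟨b, I, hI, hsh⟩ := exists_monochromatic_shattered
    (fun σ i => decide ((e.symm i : G) • x σ ∈ B))
  have hinj : Function.Injective fun i => (e.symm i : G) :=
    Subtype.val_injective.comp e.symm.injective
  have key : ∀ E : Set X, (∀ σ i, decide ((e.symm i : G) • x σ ∈ B) = b →
      (e.symm i : G) • x σ ∈ B ∪ C → (e.symm i : G) • x σ ∈ E) →
      IndepRel (Function.update A 0 E) D (I.map ⟨_, hinj⟩ : Finset G) := by
    intro E hE F hF _ τ
    obtain ⟨σ, hσ⟩ := hsh fun i => τ (e.symm i)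
    refine ⟨x σ, Set.mem_iInter₂.2 fun s hs => ?_⟩
    obtain ⟨i, hi, rfl⟩ := Finset.mem_map.1 (hF hs)
    obtain ⟨hστ, hcol⟩ := hσ i hi
    obtain ⟨hxD, hxA⟩ := hx σ (e.symm i) (e.symm i).2
    rw [hw] at hxA
    refine ⟨hxD, ?_⟩
    simp only [Function.Embedding.coeFn_mk, Set.mem_preimage, ← hστ]
    by_cases h0 : σ i = 0
    · rw [h0, Function.update_self]
      exact hE σ i (hcol h0) (by rwa [h0, hA] at hxA)
    · rwa [Function.update_of_ne h0]
  refine ⟨I.map ⟨_, hinj⟩, ?_, by simpa using hI, ?_⟩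
  · intro s hs
    obtain ⟨i, _, rfl⟩ := Finset.mem_map.1 hs
    exact (e.symm i).2
  · cases b with
    | true => exact Or.inl (key B fun σ i h _ => of_decide_eq_true h)
    | false => exact Or.inr (key C fun σ i h h' => h'.resolve_left (of_decide_eq_false h))

lemma bddAbove_indep_ncard (A : Fin k → Set X) (D : G → Set X) (F : Finset G) :
    BddAbove {m : ℕ | ∃ J : Set G, IndepRel A D J ∧ m = ((F : Set G) ∩ J).ncard} := by
  refine ⟨F.card, ?_⟩
  rintro _ ⟨J, _, rfl⟩
  exact ncard_coe_inter_le F J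

lemma IndepRel.card_le_maxIndep {A : Fin k → Set X} {D : G → Set X} {F J : Finset G}
    (h : IndepRel A D J) (hJF : J ⊆ F) : J.card ≤ maxIndep A D F := by
  refine le_csSup (bddAbove_indep_ncard A D F) ⟨J, h, ?_⟩
  rw [Set.inter_eq_self_of_subset_right (by exact_mod_cast hJF), Set.ncard_coe_finset]

lemma exists_indepRel_card_eq_maxIndep (A : Fin k → Set X) (D : G → Set X) (F : Finset G) :
    ∃ J ⊆ F, IndepRel A D J ∧ J.card = maxIndep A D F := by
  obtain ⟨J, hJ, hm⟩ := Nat.sSup_mem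
    (s := {m : ℕ | ∃ J : Set G, IndepRel A D J ∧ m = ((F : Set G) ∩ J).ncard})
    ⟨_, ∅, indepRel_empty A D, rfl⟩ (bddAbove_indep_ncard A D F)
  have hcoe : ((F.filter (· ∈ J) : Finset G) : Set G) = (F : Set G) ∩ J := by
    ext s
    simp
  refine ⟨F.filter (· ∈ J), Finset.filter_subset _ _, ?_, ?_⟩
  · exact hJ.mono (fun _ => subset_rfl) (by rw [hcoe]; exact Set.inter_subset_right)
  · rw [← Set.ncard_coe_finset, hcoe]
    exact hm.symm

variable [MeasurableSpace X] (μ : Measure X)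

lemma phiConst_le_maxIndep {A : Fin k → Set X} {δ : ℝ} {D : Set X} (hD : MeasurableSet D)
    (hμ : 1 - δ ≤ (μ D).toReal) (F : Finset G) :
    phiConst μ A δ F ≤ maxIndep A (fun _ => D) F :=
  Nat.sInf_le ⟨D, hD, hμ, rfl⟩

variable [IsProbabilityMeasure μ]

lemma exists_phiConst_eq (A : Fin k → Set X) {δ : ℝ} (hδ : 0 < δ) (F : Finset G) :
    ∃ D : Set X, MeasurableSet D ∧ 1 - δ ≤ (μ D).toReal ∧
      phiConst μ A δ F = maxIndep A (fun _ => D) F :=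
  Nat.sInf_mem (s := {m : ℕ | ∃ D : Set X, MeasurableSet D ∧ 1 - δ ≤ (μ D).toReal ∧
    m = maxIndep A (fun _ : G => D) F}) ⟨_, Set.univ, MeasurableSet.univ, by simp [hδ.le], rfl⟩

lemma phiConst_le_card (A : Fin k → Set X) {δ : ℝ} (hδ : 0 < δ) (F : Finset G) :
    phiConst μ A δ F ≤ F.card := by
  obtain ⟨D, _, _, hD⟩ := exists_phiConst_eq μ A hδ F
  obtain ⟨J, hJF, _, hJ⟩ := exists_indepRel_card_eq_maxIndep A (fun _ => D) F
  rw [hD, ← hJ]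
  exact Finset.card_le_card hJF

lemma phiConst_split {A : Fin (k + 1) → Set X} {B C : Set X} (hA : A 0 = B ∪ C) {δ : ℝ}
    (hδ : 0 < δ) (F : Finset G) :
    splitConst k * phiConst μ A δ F ≤ phiConst μ (Function.update A 0 B) (δ / 2) F ∨
      splitConst k * phiConst μ A δ F ≤ phiConst μ (Function.update A 0 C) (δ / 2) F := by
  obtain ⟨D₁, hD₁, hμ₁, h₁⟩ := exists_phiConst_eq μ (Function.update A 0 B) (half_pos hδ) F
  obtain ⟨D₂, hD₂, hμ₂, h₂⟩ := exists_phiConst_eq μ (Function.update A 0 C) (half_pos hδ) F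
  have hμ : 1 - δ ≤ (μ (D₁ ∩ D₂)).toReal := by
    have hadd := measureReal_union_add_inter (μ := μ) (s := D₁) hD₂
    have hle : μ.real (D₁ ∪ D₂) ≤ 1 := measureReal_le_one
    simp only [Measure.real] at hadd hle
    linarith
  have hφ := phiConst_le_maxIndep μ (A := A) (hD₁.inter hD₂) hμ F
  obtain ⟨J, hJF, hJ, hJcard⟩ := exists_indepRel_card_eq_maxIndep A (fun _ : G => D₁ ∩ D₂) F
  obtain ⟨J', hJJ', hcard, h⟩ := exists_indepRel_update hA hJ
  have hle : splitConst k * phiConst μ A δ F ≤ J'.card := by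
    refine le_trans ?_ hcard
    rw [hJcard]
    have := (splitConst_pos k).le
    gcongr
  rw [h₁, h₂]
  refine h.imp (fun h => hle.trans ?_) (fun h => hle.trans ?_)
  · exact_mod_cast (h.mono (fun _ => Set.inter_subset_left) subset_rfl).card_le_maxIndep
      (hJJ'.trans hJF)
  · exact_mod_cast (h.mono (fun _ => Set.inter_subset_right) subset_rfl).card_le_maxIndep
      (hJJ'.trans hJF)

end Independence

section Limsup

variable {G : Type*} [Group G]

lemma FolnerInv.mono {K K' F : Finset G} {δ δ' : ℝ} (h : FolnerInv K δ F) (hK : K' ⊆ K)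
    (hδ : δ ≤ δ') : FolnerInv K' δ' F := by
  refine ⟨h.1, ?_⟩
  have hsub : (F : Set G) ∩ {s | ∀ g ∈ K, g * s ∈ F} ⊆
      (F : Set G) ∩ {s | ∀ g ∈ K', g * s ∈ F} :=
    Set.inter_subset_inter_right _ fun s hs g hg => hs g (hK hg)
  have hcard := Set.ncard_le_ncard hsub (F.finite_toSet.subset Set.inter_subset_left)
  calc (1 - δ') * (F.card : ℝ) ≤ (1 - δ) * F.card := by gcongr
    _ ≤ _ := h.2
    _ ≤ _ := by exact_mod_cast hcard

variable {ψ : Finset G → ℝ}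

lemma bddAbove_density (hψ : ∀ F, ψ F ≤ F.card) (K : Finset G) (δ : ℝ) :
    BddAbove ((fun F : Finset G => ψ F / (F.card : ℝ)) '' {F | FolnerInv K δ F}) := by
  refine ⟨1, ?_⟩
  rintro _ ⟨F, _, rfl⟩
  exact div_le_one_of_le₀ (hψ F) (Nat.cast_nonneg _)

lemma sSup_density_nonneg (hψ₀ : ∀ F, 0 ≤ ψ F) (K : Finset G) (δ : ℝ) :
    0 ≤ sSup ((fun F : Finset G => ψ F / (F.card : ℝ)) '' {F | FolnerInv K δ F}) := by
  refine Real.sSup_nonneg ?_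
  rintro _ ⟨F, _, rfl⟩
  exact div_nonneg (hψ₀ F) (Nat.cast_nonneg _)

lemma invLimsup_le_sSup (hψ₀ : ∀ F, 0 ≤ ψ F) (K : Finset G) (δ : {d : ℝ // 0 < d}) :
    invLimsup ψ ≤
      sSup ((fun F : Finset G => ψ F / (F.card : ℝ)) '' {F | FolnerInv K δ.1 F}) := by
  refine (ciInf_le ⟨0, ?_⟩ K).trans (ciInf_le ⟨0, ?_⟩ δ)
  · rintro _ ⟨K, rfl⟩
    exact Real.iInf_nonneg fun δ => sSup_density_nonneg hψ₀ K δ.1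
  · rintro _ ⟨δ, rfl⟩
    exact sSup_density_nonneg hψ₀ K δ.1

lemma invLimsup_le_one (hψ₀ : ∀ F, 0 ≤ ψ F) (hψ : ∀ F, ψ F ≤ F.card) : invLimsup ψ ≤ 1 := by
  refine (invLimsup_le_sSup hψ₀ ∅ ⟨1, one_pos⟩).trans (Real.sSup_le ?_ zero_le_one)
  rintro _ ⟨F, _, rfl⟩
  exact div_le_one_of_le₀ (hψ F) (Nat.cast_nonneg _)

lemma invLimsup_pos_iff (hamen : FolnerAmenable G) (hψ₀ : ∀ F, 0 ≤ ψ F)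
    (hψ : ∀ F, ψ F ≤ F.card) :
    0 < invLimsup ψ ↔ ∃ d > 0, ∀ (K : Finset G) (δ : ℝ), 0 < δ →
      ∃ F, FolnerInv K δ F ∧ d * F.card ≤ ψ F := by
  constructor
  · intro h
    refine ⟨invLimsup ψ / 2, half_pos h, fun K δ hδ => ?_⟩
    have hlt := (half_lt_self h).trans_le (invLimsup_le_sSup hψ₀ K ⟨δ, hδ⟩)
    obtain ⟨F₀, hF₀⟩ := hamen K δ hδ
    obtain ⟨_, ⟨F, hF, rfl⟩, hlt⟩ := exists_lt_of_lt_csSup (Set.Nonempty.image _ ⟨F₀, hF₀⟩) hlt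
    refine ⟨F, hF, ?_⟩
    have hpos : (0 : ℝ) < F.card := by exact_mod_cast hF.1.card_pos
    exact ((lt_div_iff₀ hpos).1 hlt).le
  · rintro ⟨d, hd, h⟩
    have : Nonempty {d : ℝ // 0 < d} := ⟨⟨1, one_pos⟩⟩
    refine hd.trans_le (le_ciInf fun K => le_ciInf fun δ => ?_)
    obtain ⟨F, hF, hle⟩ := h K δ.1 δ.2
    have hpos : (0 : ℝ) < F.card := by exact_mod_cast hF.1.card_pos
    exact le_csSup_of_le (bddAbove_density hψ K δ.1) ⟨F, hF, rfl⟩ ((le_div_iff₀ hpos).2 hle)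

end Limsup

lemma upperIndepDens_pos_iff {G X : Type*} [Group G] [MulAction G X] [MeasurableSpace X]
    (hamen : FolnerAmenable G) (μ : Measure X) [IsProbabilityMeasure μ] {k : ℕ}
    (A : Fin k → Set X) :
    0 < upperIndepDens G μ A ↔ ∃ ε > 0, ∃ d > (0 : ℝ), ∀ (K : Finset G) (δ : ℝ), 0 < δ →
      ∃ F, FolnerInv K δ F ∧ d * F.card ≤ phiConst μ A ε F := by
  have hle : ∀ ε : {d : ℝ // 0 < d}, ∀ F : Finset G, (phiConst μ A ε.1 F : ℝ) ≤ F.card :=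
    fun ε F => by exact_mod_cast phiConst_le_card μ A ε.2 F
  have hnn : ∀ ε : {d : ℝ // 0 < d}, ∀ F : Finset G, (0 : ℝ) ≤ phiConst μ A ε.1 F :=
    fun _ _ => Nat.cast_nonneg _
  constructor
  · intro h
    have : Nonempty {d : ℝ // 0 < d} := ⟨⟨1, one_pos⟩⟩
    obtain ⟨ε, hε⟩ := exists_lt_of_lt_ciSup h
    exact ⟨ε.1, ε.2, (invLimsup_pos_iff hamen (hnn ε) (hle ε)).1 hε⟩
  · rintro ⟨ε, hε, h⟩
    refine ((invLimsup_pos_iff hamen (hnn ⟨ε, hε⟩) (hle ⟨ε, hε⟩)).2 h).trans_le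
      (le_ciSup (f := fun ε : {d : ℝ // 0 < d} =>
        invLimsup fun F : Finset G => (phiConst μ A ε.1 F : ℝ)) ⟨1, ?_⟩ ⟨ε, hε⟩)
    rintro _ ⟨ε, rfl⟩
    exact invLimsup_le_one (hnn ε) (hle ε)

/-- Lemma: if the tuple `A` (with `A 0 = B ∪ C`) has positive upper `μ`-independence
density, then so does one of the tuples obtained by replacing `A 0` with `B` or `C`. -/
theorem stmt2 {G X : Type*} [Group G] [TopologicalSpace X] [CompactSpace X] [T2Space X]
    [MulAction G X] [ContinuousConstSMul G X] [MeasurableSpace X] [BorelSpace X]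
    (hamen : FolnerAmenable G)
    (μ : Measure X) [IsProbabilityMeasure μ] (hinv : InvariantMeasure G μ)
    (k : ℕ) (A : Fin (k + 1) → Set X) (B C : Set X) (hA : A 0 = B ∪ C)
    (hpos : 0 < upperIndepDens G μ A) :
    0 < upperIndepDens G μ (Function.update A 0 B) ∨
      0 < upperIndepDens G μ (Function.update A 0 C) := by
  obtain ⟨ε, hε, d, hd, h⟩ := (upperIndepDens_pos_iff hamen μ A).1 hpos
  rw [upperIndepDens_pos_iff hamen, upperIndepDens_pos_iff hamen]
  have hcd : 0 < splitConst k * d := mul_pos (splitConst_pos k) hd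
  by_contra! hcon
  obtain ⟨K₁, δ₁, hδ₁, h₁⟩ := hcon.1 (ε / 2) (half_pos hε) _ hcd
  obtain ⟨K₂, δ₂, hδ₂, h₂⟩ := hcon.2 (ε / 2) (half_pos hε) _ hcd
  obtain ⟨F, hF, hdF⟩ := h (K₁ ∪ K₂) (min δ₁ δ₂) (lt_min hδ₁ hδ₂)
  have hlt₁ := h₁ F (hF.mono Finset.subset_union_left (min_le_left _ _))
  have hlt₂ := h₂ F (hF.mono Finset.subset_union_right (min_le_right _ _))
  have hmul := mul_le_mul_of_nonneg_left hdF (splitConst_pos k).le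
  rw [← mul_assoc] at hmul
  rcases phiConst_split μ hA hε F with hsplit | hsplit <;> linarith
end

section
/- For every d > 0 there exist δ > 0, c > 0, and M > 0 such that if F is a finite subset of G with |F| ≥ M, D ∈ ℬ'(μ,δ), 𝒫 = {P_1, P_2} is a two-element Borel partition of X with H_μ(𝒫^F)/|F| ≥ d, and A_1 ⊆ P_1 and A_2 ⊆ P_2 are Borel sets with μ(P_1 ∖ A_1) < δ and μ(P_2 ∖ A_2) < δ, then the pair (A_1, A_2) has an independence set I ⊆ F relative to D with |I| ≥ c|F|. -/
open MeasureTheory Set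
open scoped Classical ENNReal

/-- A finite set `F` has at most `exp (η |F|)` subsets of cardinality at most `c |F|`, provided
`c` is small enough in terms of `η`. -/
theorem exists_card_small_subsets_le_exp (α : Type*) {η : ℝ} (hη : 0 < η) :
    ∃ c : ℝ, 0 < c ∧ ∀ F : Finset α,
      ((F.powerset.filter fun S => (S.card : ℝ) ≤ c * F.card).card : ℝ) ≤
        Real.exp (η * F.card) := by
  set u : ℝ := |Real.log (η / 2)| + 1 with hu
  have hu0 : 0 < u := by positivity
  refine ⟨η / 2 / u, by positivity, fun F => ?_⟩
  set n : ℝ := (F.card : ℝ) with hn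
  have htu : Real.exp (-u) ≤ η / 2 := by
    rw [← Real.exp_log (half_pos hη)]
    apply Real.exp_le_exp.mpr
    have := neg_abs_le (Real.log (η / 2))
    linarith
  have hsum : ∑ S ∈ F.powerset, Real.exp (-u) ^ S.card = (Real.exp (-u) + 1) ^ F.card := by
    have := Finset.sum_pow_mul_eq_add_pow (Real.exp (-u)) 1 F
    simpa using this
  have hlow : ((F.powerset.filter fun S => (S.card : ℝ) ≤ η / 2 / u * n).card : ℝ) *
      Real.exp (-(η / 2 * n)) ≤ ∑ S ∈ F.powerset, Real.exp (-u) ^ S.card := by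
    calc _ = ∑ S ∈ F.powerset.filter fun S => (S.card : ℝ) ≤ η / 2 / u * n,
          Real.exp (-(η / 2 * n)) := by simp
      _ ≤ ∑ S ∈ F.powerset.filter fun S => (S.card : ℝ) ≤ η / 2 / u * n,
          Real.exp (-u) ^ S.card := by
        apply Finset.sum_le_sum
        intro S hS
        rw [← Real.exp_nat_mul]
        apply Real.exp_le_exp.mpr
        have h := mul_le_mul_of_nonneg_right (Finset.mem_filter.mp hS).2 hu0.le
        have h2 : η / 2 / u * n * u = η / 2 * n := by field_simp
        linarith
      _ ≤ _ := Finset.sum_le_sum_of_subset_of_nonneg (Finset.filter_subset _ _)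
        fun _ _ _ => by positivity
  have hupp : (Real.exp (-u) + 1) ^ F.card ≤ Real.exp (η / 2 * n) := by
    calc (Real.exp (-u) + 1) ^ F.card ≤ Real.exp (η / 2) ^ F.card := by
          gcongr
          linarith [Real.add_one_le_exp (η / 2)]
      _ = _ := by rw [← Real.exp_nat_mul, mul_comm]
  rw [hsum] at hlow
  have h := mul_le_mul_of_nonneg_right (hlow.trans hupp) (Real.exp_pos (η / 2 * n)).le
  rw [mul_assoc, ← Real.exp_add, ← Real.exp_add] at h
  simpa [← add_mul] using h

/-- Sauer–Shelah for labellings with errors: if the points of `Y` carry words `w x ⊆ F` and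
error sets `B x ⊆ F` of size at most `m`, and every set shattered by words without errors on it
has size at most `m`, then the number of words is at most the cube of the number of subsets of
`F` of size at most `m`. -/
theorem card_words_le_cube {α X : Type*} {F : Finset α} {Y : Set X} {w B : X → Finset α}
    {m : ℝ} (hw : ∀ x, w x ⊆ F) (hB : ∀ x, B x ⊆ F) (hBm : ∀ x ∈ Y, ((B x).card : ℝ) ≤ m)
    (hI : ∀ I ⊆ F, (∀ T ⊆ I, ∃ x ∈ Y, I ∩ w x = T ∧ Disjoint (B x) I) → (I.card : ℝ) ≤ m)
    {W : Finset (Finset α)} (hW : ∀ v ∈ W, ∃ x ∈ Y, w x = v) :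
    W.card ≤ (F.powerset.filter fun S => (S.card : ℝ) ≤ m).card ^ 3 := by
  set small := F.powerset.filter fun S => (S.card : ℝ) ≤ m with hsmall
  let core (b : Finset α) : Finset (Finset α) :=
    F.powerset.filter fun a => ∃ x ∈ Y, B x = b ∧ w x \ b = a
  have hcore (b : Finset α) : (core b).card ≤ small.card := by
    refine (Finset.card_le_card_shatterer _).trans (Finset.card_le_card fun I hIs => ?_)
    rw [Finset.mem_shatterer] at hIs
    obtain ⟨a, ha, haI⟩ := hIs.exists_superset
    obtain ⟨haF, x, -, -, hxa⟩ := Finset.mem_filter.mp ha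
    have hIF : I ⊆ F := haI.trans (Finset.mem_powerset.mp haF)
    have hIb : Disjoint b I := by
      rw [← hxa] at haI
      exact (Finset.disjoint_of_subset_left haI Finset.sdiff_disjoint).symm
    refine Finset.mem_filter.mpr ⟨Finset.mem_powerset.mpr hIF, hI I hIF fun T hT => ?_⟩
    obtain ⟨a', ha', hT'⟩ := hIs hT
    obtain ⟨-, y, hyY, hyb, hya⟩ := Finset.mem_filter.mp ha'
    refine ⟨y, hyY, ?_, hyb ▸ hIb⟩
    rw [← hT', ← hya]
    ext s
    have : s ∈ I → s ∉ b := fun h => Finset.disjoint_right.mp hIb h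
    simp only [Finset.mem_inter, Finset.mem_sdiff]
    tauto
  have hsub : W ⊆ small.biUnion fun b => (core b ×ˢ small).image fun p => p.1 ∪ p.2 := by
    intro v hv
    obtain ⟨x, hx, rfl⟩ := hW v hv
    have hbs : B x ∈ small :=
      Finset.mem_filter.mpr ⟨Finset.mem_powerset.mpr (hB x), hBm x hx⟩
    refine Finset.mem_biUnion.mpr ⟨B x, hbs, Finset.mem_image.mpr
      ⟨(w x \ B x, w x ∩ B x), Finset.mem_product.mpr ⟨?_, ?_⟩, ?_⟩⟩
    · exact Finset.mem_filter.mpr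
        ⟨Finset.mem_powerset.mpr (Finset.sdiff_subset.trans (hw x)), x, hx, rfl, rfl⟩
    · refine Finset.mem_filter.mpr
        ⟨Finset.mem_powerset.mpr (Finset.inter_subset_left.trans (hw x)), ?_⟩
      exact le_trans (by exact_mod_cast Finset.card_le_card Finset.inter_subset_right) (hBm x hx)
    · exact Finset.sdiff_union_inter _ _
  calc W.card ≤ _ := Finset.card_le_card hsub
    _ ≤ small.card * (small.card * small.card) := by
      refine Finset.card_biUnion_le_card_mul _ _ _ fun b _ => Finset.card_image_le.trans ?_
      rw [Finset.card_product]
      exact Nat.mul_le_mul_right _ (hcore b)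
    _ = small.card ^ 3 := by ring

/-- The tangent-line bound for `negMulLog` at `exp (-L)`. -/
theorem negMulLog_le_mul_add_exp {p : ℝ} (hp : 0 ≤ p) (L : ℝ) :
    Real.negMulLog p ≤ p * L + Real.exp (-L) := by
  rcases hp.eq_or_lt with rfl | hp
  · simpa using (Real.exp_pos _).le
  · have h := Real.add_one_le_exp (-L - Real.log p)
    rw [Real.exp_sub, Real.exp_log hp, le_div_iff₀ hp] at h
    rw [Real.negMulLog]
    nlinarith

/-- Entropy of a disjoint family is controlled by the number of cells meeting a set `Y` of
measure at least `1 - ε`. -/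
theorem sum_negMulLog_le_of_card_meeting {X ι : Type*} [MeasurableSpace X] [Fintype ι]
    [Nonempty ι] (μ : Measure X) [IsProbabilityMeasure μ] {C : ι → Set X}
    (hC : ∀ i, MeasurableSet (C i)) (hd : Pairwise fun i j => Disjoint (C i) (C j))
    {Y : Set X} {ε L : ℝ} (hY : μ.real Yᶜ ≤ ε) (hL : 0 ≤ L)
    (hcard : ((Finset.univ.filter fun i => (C i ∩ Y).Nonempty).card : ℝ) ≤ Real.exp L) :
    ∑ i, Real.negMulLog (μ.real (C i)) ≤ L + ε * Real.log (Fintype.card ι) + 2 := by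
  have hmass (S : Finset ι) : ∑ i ∈ S, μ.real (C i) = μ.real (⋃ i ∈ S, C i) :=
    (measureReal_biUnion_finset (fun i _ j _ h => hd h) fun i _ => hC i).symm
  have hbound (S : Finset ι) {K : ℝ} (hS : (S.card : ℝ) ≤ Real.exp K) :
      ∑ i ∈ S, Real.negMulLog (μ.real (C i)) ≤ μ.real (⋃ i ∈ S, C i) * K + 1 := by
    calc _ ≤ ∑ i ∈ S, (μ.real (C i) * K + Real.exp (-K)) :=
          Finset.sum_le_sum fun i _ => negMulLog_le_mul_add_exp measureReal_nonneg K
      _ = μ.real (⋃ i ∈ S, C i) * K + S.card * Real.exp (-K) := by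
        rw [Finset.sum_add_distrib, ← Finset.sum_mul, hmass]
        simp
      _ ≤ μ.real (⋃ i ∈ S, C i) * K + Real.exp K * Real.exp (-K) := by gcongr
      _ = _ := by rw [← Real.exp_add]; simp
  have hpos : (0 : ℝ) < Fintype.card ι := by exact_mod_cast Fintype.card_pos
  have hlog : 0 ≤ Real.log (Fintype.card ι) := Real.log_natCast_nonneg _
  rw [← Finset.sum_filter_add_sum_filter_not Finset.univ fun i => (C i ∩ Y).Nonempty]
  have hgood := hbound _ hcard
  have hbad := hbound (Finset.univ.filter fun i => ¬ (C i ∩ Y).Nonempty)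
    (K := Real.log (Fintype.card ι)) (by
      rw [Real.exp_log hpos]
      exact_mod_cast Finset.card_le_univ _)
  have hgood_le : μ.real (⋃ i ∈ Finset.univ.filter fun i => (C i ∩ Y).Nonempty, C i) * L ≤ L :=
    mul_le_of_le_one_left hL measureReal_le_one
  have hbad_le : μ.real (⋃ i ∈ Finset.univ.filter fun i => ¬ (C i ∩ Y).Nonempty, C i) ≤ ε := by
    refine (measureReal_mono fun x hx => ?_).trans hY
    simp only [mem_iUnion, Finset.mem_filter] at hx
    obtain ⟨i, ⟨-, hi⟩, hxi⟩ := hx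
    exact fun hxY => hi ⟨x, hxi, hxY⟩
  have := mul_le_mul_of_nonneg_right hbad_le hlog
  linarith

/-- Markov's inequality for the number of sets of a finite family containing a given point. -/
theorem measureReal_card_mem_gt_le {α X : Type*} [MeasurableSpace X] (μ : Measure X)
    [IsProbabilityMeasure μ] {F : Finset α} (hF : F.Nonempty) {E : α → Set X}
    (hE : ∀ s, MeasurableSet (E s)) {e c : ℝ} (hc : 0 < c) (he : ∀ s, μ.real (E s) ≤ e) :
    μ.real {x | ((F.filter fun s => x ∈ E s).card : ℝ) ≤ c * F.card}ᶜ ≤ e / c := by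
  have hn : (0 : ℝ) < F.card := by exact_mod_cast hF.card_pos
  have hcount (x : X) : ((F.filter fun s => x ∈ E s).card : ℝ) =
      ∑ s ∈ F, (E s).indicator (fun _ => (1 : ℝ)) x := by
    simp [indicator_apply]
  have hint (s : α) : Integrable ((E s).indicator fun _ => (1 : ℝ)) μ :=
    (integrable_const _).indicator (hE s)
  have hmarkov := mul_meas_ge_le_integral_of_nonneg (μ := μ)
    (f := fun x => ∑ s ∈ F, (E s).indicator (fun _ => (1 : ℝ)) x)
    (Filter.Eventually.of_forall fun x =>
      Finset.sum_nonneg fun s _ => indicator_nonneg (fun _ _ => zero_le_one) x)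
    (integrable_finsetSum _ fun s _ => hint s) (c * F.card)
  rw [integral_finsetSum _ fun s _ => hint s] at hmarkov
  have hsum : ∑ s ∈ F, ∫ x, (E s).indicator (fun _ => (1 : ℝ)) x ∂μ ≤ F.card * e := by
    rw [← nsmul_eq_mul]
    refine Finset.sum_le_card_nsmul _ _ _ fun s _ => ?_
    rw [integral_indicator_const _ (hE s)]
    simpa using he s
  have hmono : μ.real {x | ((F.filter fun s => x ∈ E s).card : ℝ) ≤ c * F.card}ᶜ ≤
      μ.real {x | c * F.card ≤ ∑ s ∈ F, (E s).indicator (fun _ => (1 : ℝ)) x} := by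
    refine measureReal_mono fun x hx => ?_
    rw [mem_compl_iff, mem_ofPred_eq, hcount, not_le] at hx
    exact hx.le
  refine hmono.trans ?_
  rw [le_div_iff₀ hc]
  refine le_of_mul_le_mul_left ?_ hn
  linarith

/-- Lemma: quantitative production of independence sets from entropy, relative to maps
`D : G → Set X` with `μ(D s) ≥ 1 - δ`. -/
theorem stmt3 {G X : Type*} [Group G] [TopologicalSpace X] [CompactSpace X] [T2Space X]
    [MulAction G X] [ContinuousConstSMul G X] [MeasurableSpace X] [BorelSpace X]
    (μ : Measure X) [IsProbabilityMeasure μ] (hinv : InvariantMeasure G μ) :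
    ∀ d : ℝ, 0 < d → ∃ δ c M : ℝ, 0 < δ ∧ 0 < c ∧ 0 < M ∧
      ∀ F : Finset G, M ≤ (F.card : ℝ) →
      ∀ D : G → Set X, (∀ s, MeasurableSet (D s)) → (∀ s, 1 - δ ≤ (μ (D s)).toReal) →
      ∀ P₁ P₂ : Set X, MeasurableSet P₁ → MeasurableSet P₂ → Disjoint P₁ P₂ →
        P₁ ∪ P₂ = Set.univ →
        d ≤ HJoin μ ![P₁, P₂] F / (F.card : ℝ) →
      ∀ A₁ A₂ : Set X, MeasurableSet A₁ → MeasurableSet A₂ → A₁ ⊆ P₁ → A₂ ⊆ P₂ →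
        (μ (P₁ \ A₁)).toReal < δ → (μ (P₂ \ A₂)).toReal < δ →
        ∃ I : Finset G, I ⊆ F ∧ c * (F.card : ℝ) ≤ (I.card : ℝ) ∧
          IndepRel ![A₁, A₂] D (↑I : Set G) := by
  intro d hd
  obtain ⟨c, hc, hsmall⟩ := exists_card_small_subsets_le_exp G (η := d / 8) (by positivity)
  refine ⟨c * (d / 4) / 3, c, 16 / d, by positivity, hc, by positivity, ?_⟩
  intro F hFM D hD hDμ P₁ P₂ hP₁ hP₂ hdisj hunion hH A₁ A₂ hA₁ hA₂ hA₁P hA₂P hμ₁ hμ₂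
  have hn : (0 : ℝ) < F.card := lt_of_lt_of_le (by positivity) hFM
  have hFne : F.Nonempty := Finset.card_pos.mp (by exact_mod_cast hn)
  have hsmul (s : G) : Measurable fun x : X => s • x := (continuous_const_smul s).measurable
  let E (s : G) : Set X := (D s)ᶜ ∪ (fun x => s • x) ⁻¹' (A₁ ∪ A₂)ᶜ
  have hEmeas (s : G) : MeasurableSet (E s) :=
    (hD s).compl.union (hsmul s (hA₁.union hA₂).compl)
  have hE (s : G) : μ.real (E s) ≤ c * (d / 4) := by
    have h1 : μ.real (D s)ᶜ ≤ c * (d / 4) / 3 := by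
      rw [probReal_compl_eq_one_sub (hD s)]
      have := hDμ s
      rw [← measureReal_def] at this
      linarith
    have h2 : μ.real ((fun x => s • x) ⁻¹' (A₁ ∪ A₂)ᶜ) = μ.real (A₁ ∪ A₂)ᶜ := by
      rw [measureReal_def, hinv s _ (hA₁.union hA₂).compl, measureReal_def]
    have h3 : μ.real (A₁ ∪ A₂)ᶜ ≤ μ.real (P₁ \ A₁) + μ.real (P₂ \ A₂) := by
      refine (measureReal_mono fun x hx => ?_).trans (measureReal_union_le _ _)
      have hxP : x ∈ P₁ ∪ P₂ := hunion ▸ mem_univ x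
      rw [mem_compl_iff, mem_union, not_or] at hx
      exact hxP.imp (fun h => ⟨h, hx.1⟩) fun h => ⟨h, hx.2⟩
    have h4 := measureReal_union_le (μ := μ) (D s)ᶜ ((fun x => s • x) ⁻¹' (A₁ ∪ A₂)ᶜ)
    rw [← measureReal_def] at hμ₁ hμ₂
    change μ.real ((D s)ᶜ ∪ _) ≤ _
    linarith
  let B (x : X) : Finset G := F.filter fun s => x ∈ E s
  let w (x : X) : Finset G := F.filter fun s => s • x ∈ P₁
  let Y : Set X := {x | ((B x).card : ℝ) ≤ c * F.card}
  have hY : μ.real Yᶜ ≤ d / 4 := by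
    have := measureReal_card_mem_gt_le μ hFne hEmeas hc hE
    rw [mul_div_cancel_left₀ _ hc.ne'] at this
    convert this
  by_contra hno
  have hshatter (I : Finset G) (hIF : I ⊆ F)
      (hI : ∀ T ⊆ I, ∃ x ∈ Y, I ∩ w x = T ∧ Disjoint (B x) I) :
      (I.card : ℝ) ≤ c * F.card := by
    by_contra! hlt
    refine hno ⟨I, hIF, hlt.le, fun J hJI _ σ => ?_⟩
    obtain ⟨x, -, hxw, hxB⟩ := hI (I.filter fun s => σ s = 0) (Finset.filter_subset _ _)
    refine ⟨x, mem_iInter₂.mpr fun s hs => ?_⟩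
    have hsI : s ∈ I := Finset.mem_coe.mp (hJI hs)
    have hsE : x ∉ E s := fun h =>
      Finset.disjoint_right.mp hxB hsI (Finset.mem_filter.mpr ⟨hIF hsI, h⟩)
    have hsw : s • x ∈ P₁ ↔ σ s = 0 := by
      have := Finset.ext_iff.mp hxw s
      simpa [w, hsI, hIF hsI] using this
    simp only [E, mem_union, not_or, mem_compl_iff, not_not, mem_preimage, ← or_iff_not_and_not]
      at hsE
    refine ⟨hsE.1, ?_⟩
    rcases Fin.exists_fin_two.mp ⟨σ s, rfl⟩ with h | h
    · rw [mem_preimage, h]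
      exact hsE.2.resolve_right fun h2 => disjoint_left.mp hdisj (hsw.mpr h) (hA₂P h2)
    · rw [mem_preimage, h]
      exact hsE.2.resolve_left fun h1 => by simp [h] at hsw; exact hsw (hA₁P h1)
  let C (f : ↥F → Fin 2) : Set X := ⋂ s : ↥F, (fun x => (s : G) • x) ⁻¹' (![P₁, P₂] (f s))
  have hPmeas (i : Fin 2) : MeasurableSet (![P₁, P₂] i) := by
    fin_cases i <;> assumption
  have hPw {x : X} {i : Fin 2} (hx : x ∈ ![P₁, P₂] i) : x ∈ P₁ ↔ i = 0 := by
    fin_cases i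
    · simpa using hx
    · simpa using disjoint_right.mp hdisj hx
  have hCw {f : ↥F → Fin 2} {x : X} (hx : x ∈ C f) (s : ↥F) : (s : G) ∈ w x ↔ f s = 0 := by
    rw [← hPw (mem_iInter.mp hx s)]
    simp [w]
  have hfun {f g : ↥F → Fin 2} (h : ∀ s, f s = 0 ↔ g s = 0) : f = g := by
    funext s
    have := h s
    omega
  have hCmeas (f : ↥F → Fin 2) : MeasurableSet (C f) :=
    MeasurableSet.iInter fun s => hsmul s (hPmeas _)
  have hCdisj : Pairwise fun f g => Disjoint (C f) (C g) := fun f g hfg =>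
    disjoint_left.mpr fun x hf hg =>
      hfg (hfun fun s => (hCw hf s).symm.trans (hCw hg s))
  let v (f : ↥F → Fin 2) : Finset G := (Finset.univ.filter fun s => f s = 0).map
    (Function.Embedding.subtype _)
  have hv (f : ↥F → Fin 2) (s : ↥F) : (s : G) ∈ v f ↔ f s = 0 := by simp [v]
  have hvinj : Function.Injective v := fun f g h =>
    hfun fun s => by rw [← hv f, ← hv g, h]
  have hvw {f : ↥F → Fin 2} {x : X} (hx : x ∈ C f) : w x = v f := by
    ext s
    by_cases hs : s ∈ F
    · exact (hCw hx ⟨s, hs⟩).trans (hv f ⟨s, hs⟩).symm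
    · simp [w, v, hs]
  have hcard : ((Finset.univ.filter fun f => (C f ∩ Y).Nonempty).card : ℝ) ≤
      Real.exp (3 * (d / 8 * F.card)) := by
    have h := card_words_le_cube (F := F) (Y := Y) (w := w) (B := B)
      (fun x => Finset.filter_subset _ _) (fun x => Finset.filter_subset _ _) (fun x hx => hx)
      hshatter (W := (Finset.univ.filter fun f => (C f ∩ Y).Nonempty).image v) (by
        intro u hu
        obtain ⟨f, hf, rfl⟩ := Finset.mem_image.mp hu
        obtain ⟨x, hxC, hxY⟩ := (Finset.mem_filter.mp hf).2
        exact ⟨x, hxY, hvw hxC⟩)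
    rw [Finset.card_image_of_injective _ hvinj] at h
    calc _ ≤ ((F.powerset.filter fun S => (S.card : ℝ) ≤ c * F.card).card : ℝ) ^ 3 := by
          exact_mod_cast h
      _ ≤ Real.exp (d / 8 * F.card) ^ 3 := by gcongr; exact hsmall F
      _ = _ := by rw [← Real.exp_nat_mul]; norm_num
  have hent : HJoin μ ![P₁, P₂] F ≤ _ :=
    sum_negMulLog_le_of_card_meeting μ hCmeas hCdisj hY (by positivity) hcard
  have hlog : Real.log (Fintype.card (↥F → Fin 2)) ≤ F.card := by
    have : Real.log 2 ≤ 1 := Real.log_two_lt_d9.le.trans (by norm_num)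
    simp only [Fintype.card_fun, Fintype.card_fin, Fintype.card_coe, Nat.cast_pow,
      Nat.cast_ofNat, Real.log_pow]
    nlinarith
  rw [le_div_iff₀ hn] at hH
  rw [div_le_iff₀ hd] at hFM
  have := mul_le_mul_of_nonneg_left hlog (by positivity : 0 ≤ d / 4)
  linarith
end

section
/- Let A be a Borel subset of X with μ(A) > 0. Then there are d > 0 and δ > 0 such that for every finite subset F ⊆ G and every Borel set D ⊆ X with μ(D) ≥ 1−δ there is a subset H ⊆ F with |H| ≥ d|F| and D ∩ (⋂_{s∈H} s⁻¹A) ≠ ∅. -/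
open MeasureTheory

/-- Lemma: if `μ(A) > 0` then there are `d, δ > 0` such that for every finite `F ⊆ G`
and every Borel `D` with `μ(D) ≥ 1 − δ` there is `H ⊆ F` with `|H| ≥ d|F|` and
`D ∩ ⋂_{s ∈ H} s⁻¹A ≠ ∅`. -/
theorem stmt5 {G X : Type*} [Group G] [TopologicalSpace X] [CompactSpace X] [T2Space X]
    [MulAction G X] [ContinuousConstSMul G X] [MeasurableSpace X] [BorelSpace X]
    (μ : Measure X) [IsProbabilityMeasure μ]
    (hinv : ∀ (s : G) (B : Set X), MeasurableSet B → μ ((fun x => s • x) ⁻¹' B) = μ B)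
    (A : Set X) (hA : MeasurableSet A) (hApos : 0 < μ A) :
    ∃ d δ : ℝ, 0 < d ∧ 0 < δ ∧
      ∀ (F : Finset G) (D : Set X), MeasurableSet D → 1 - δ ≤ (μ D).toReal →
        ∃ H : Finset G, H ⊆ F ∧ d * (F.card : ℝ) ≤ (H.card : ℝ) ∧
          (D ∩ ⋂ s ∈ H, (fun x => s • x) ⁻¹' A).Nonempty := by
  classical
  have ha : 0 < μ.real A := ENNReal.toReal_pos hApos.ne' (measure_ne_top _ _)
  refine ⟨μ.real A / 2, μ.real A / 2, by positivity, by positivity, fun F D hD hDδ => ?_⟩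
  change 1 - μ.real A / 2 ≤ μ.real D at hDδ
  have hA1 : μ.real A ≤ 1 := measureReal_le_one
  have hD1 : μ.real D ≤ 1 := measureReal_le_one
  have hDpos : 0 < μ.real D := by linarith
  have hmeas (s : G) : MeasurableSet ((fun x : X => s • x) ⁻¹' A) :=
    (continuous_const_smul s).measurable hA
  have hreal (s : G) : μ.real ((fun x : X => s • x) ⁻¹' A) = μ.real A :=
    congrArg ENNReal.toReal (hinv s A hA)
  let f (s : G) : X → ℝ := ((fun x : X => s • x) ⁻¹' A).indicator 1
  have hf (s : G) : IntegrableOn (f s) D μ :=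
    ((integrable_const (1 : ℝ)).indicator (hmeas s)).integrableOn
  have hint (s : G) : μ.real A / 2 ≤ ∫ x in D, f s x ∂μ := by
    have hcompl : μ.real Dᶜ = 1 - μ.real D := probReal_compl_eq_one_sub hD
    have hsplit := measureReal_inter_add_sdiff (μ := μ) (s := (fun x : X => s • x) ⁻¹' A) hD
    have hdiff : μ.real ((fun x : X => s • x) ⁻¹' A \ D) ≤ μ.real Dᶜ :=
      measureReal_mono fun _ hx => hx.2
    rw [integral_indicator_one (hmeas s), measureReal_restrict_apply (hmeas s)]
    linarith [hreal s]
  have hsum : μ.real A / 2 * F.card ≤ ∫ x in D, ∑ s ∈ F, f s x ∂μ := by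
    rw [integral_finsetSum _ fun s _ => hf s, mul_comm, ← nsmul_eq_mul]
    exact F.card_nsmul_le_sum _ _ fun s _ => hint s
  obtain ⟨x, hxD, hx⟩ := exists_setAverage_le (f := fun x => ∑ s ∈ F, f s x)
    (fun h => hDpos.ne' (by simp [measureReal_def, h])) (measure_ne_top μ D)
    (integrable_finsetSum _ fun s _ => hf s)
  refine ⟨F.filter fun s => s • x ∈ A, F.filter_subset _, ?_, x, hxD, by simp⟩
  have hcount : ∑ s ∈ F, f s x = ((F.filter fun s => s • x ∈ A).card : ℝ) := by
    simp [f, Set.indicator_apply]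
  rw [setAverage_eq, smul_eq_mul] at hx
  have hnonneg : 0 ≤ ∫ x in D, ∑ s ∈ F, f s x ∂μ := le_trans (by positivity) hsum
  calc μ.real A / 2 * F.card ≤ ∫ x in D, ∑ s ∈ F, f s x ∂μ := hsum
    _ ≤ (μ.real D)⁻¹ * ∫ x in D, ∑ s ∈ F, f s x ∂μ :=
      le_mul_of_one_le_left hnonneg ((one_le_inv₀ hDpos).2 hD1)
    _ ≤ _ := hx.trans_eq hcount
end
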